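/- Let μ* := √3·(π/2 − arcsin(√(3/7))) and let μ > 0. Then a ground state of F_{6,4} at mass μ exists if and only if μ = μ*; i.e., there exists u ∈ H¹(ℝ) with ‖u‖₂² = μ and F_{6,4}(u) ≤ F_{6,4}(v) for every v ∈ H¹(ℝ) with ‖v‖₂² = μ, exactly when μ = μ*. -/

import Mathlib

open MeasureTheory Real Set

noncomputable section

/-- `u ∈ H¹(ℝ)` with weak derivative `u'`: `u` is continuous, square-integrable,
`u'` is square-integrable, and `u(b) − u(a) = ∫_a^b u'(t) dt` for all `a ≤ b`. -/
def IsH1 (u u' : ℝ → ℝ) : Prop :=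
  Continuous u ∧ Integrable (fun x => (u x) ^ 2) ∧ Integrable (fun x => (u' x) ^ 2) ∧
    ∀ a b : ℝ, a ≤ b → u b - u a = ∫ t in a..b, u' t

/-- The mass `‖u‖₂² = ∫_ℝ u(x)² dx`. -/
def mass (u : ℝ → ℝ) : ℝ := ∫ x, (u x) ^ 2

/-- `D_q(u) = (1/2)∫ u'² − (1/q)|u(0)|^q`. -/
def Dfun (q : ℝ) (u u' : ℝ → ℝ) : ℝ :=
  (1 / 2) * (∫ x, (u' x) ^ 2) - (1 / q) * |u 0| ^ q

/-- `F_{p,q}(u) = (1/2)∫ u'² − (1/p)∫ |u|^p − (1/q)|u(0)|^q`. -/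
def Ffun (p q : ℝ) (u u' : ℝ → ℝ) : ℝ :=
  (1 / 2) * (∫ x, (u' x) ^ 2) - (1 / p) * (∫ x, |u x| ^ p) - (1 / q) * |u 0| ^ q

open Filter Topology

def ACf (f f' : ℝ → ℝ) : Prop :=
  (∀ a b : ℝ, IntervalIntegrable f' volume a b) ∧ ∀ a b : ℝ, f b - f a = ∫ t in a..b, f' t

lemma ACf.locInt {f f' : ℝ → ℝ} (h : ACf f f') : LocallyIntegrable f' volume := by
  intro x
  refine ⟨Ioc (x-1) (x+1), Ioc_mem_nhds (by linarith) (by linarith), ?_⟩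
  exact (intervalIntegrable_iff_integrableOn_Ioc_of_le (by linarith)).1 (h.1 _ _)

lemma ACf.ae_deriv {f f' : ℝ → ℝ} (h : ACf f f') : ∀ᵐ x, HasDerivAt f (f' x) x := by
  filter_upwards [_root_.LocallyIntegrable.ae_hasDerivAt_integral h.locInt] with x hx
  have := (hx 0).const_add (f 0)
  refine this.congr_of_eventuallyEq (Eventually.of_forall fun y => ?_)
  have := h.2 0 y
  simp only
  linarith

lemma ACf.ac {f f' : ℝ → ℝ} (h : ACf f f') (a b : ℝ) : AbsolutelyContinuousOnInterval f a b := by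
  have h1 := (h.1 a b).absolutelyContinuousOnInterval_intervalIntegral (c := a) (by simp)
  have h2 : AbsolutelyContinuousOnInterval (fun _ : ℝ => f a) a b :=
    (contDiffOn_const).absolutelyContinuousOnInterval
  have h3 := h1.fun_add h2
  have : f = fun x => (∫ v in a..x, f' v) + f a := by
    funext x
    have := h.2 a x
    linarith
  rw [this]
  exact h3

lemma ACf.cont {f f' : ℝ → ℝ} (h : ACf f f') : Continuous f := by
  rw [continuous_iff_continuousAt]
  intro x
  have := (h.ac (x-1) (x+1)).continuousOn
  apply this.continuousAt
  rw [uIcc_of_le (by linarith)]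
  exact Icc_mem_nhds (by linarith) (by linarith)

lemma ACf.mul {f f' g g' : ℝ → ℝ} (hf : ACf f f') (hg : ACf g g') :
    ACf (fun x => f x * g x) (fun x => f' x * g x + f x * g' x) := by
  constructor
  · intro a b
    exact ((hf.1 a b).mul_continuousOn hg.cont.continuousOn).add
      ((hg.1 a b).continuousOn_mul hf.cont.continuousOn)
  · intro a b
    have h1 := ((hf.ac a b).mul (hg.ac a b)).integral_deriv_eq_sub
    have h2 : ∫ x in a..b, deriv (f * g) x = ∫ x in a..b, (f' x * g x + f x * g' x) := by
      apply intervalIntegral.integral_congr_ae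
      filter_upwards [hf.ae_deriv, hg.ae_deriv] with x h1 h2 _
      exact (h1.mul h2).deriv
    rw [← h2, h1]; rfl

lemma ACf.of_hasDerivAt {f f' : ℝ → ℝ} (h : ∀ x, HasDerivAt f (f' x) x) (hc : Continuous f') :
    ACf f f' :=
  ⟨fun a b => hc.intervalIntegrable a b, fun a b =>
    (intervalIntegral.integral_eq_sub_of_hasDerivAt (fun x _ => h x)
      (hc.intervalIntegrable a b)).symm⟩

lemma IsH1.zero_or {u u' : ℝ → ℝ} (h : IsH1 u u') (hm : 0 < mass u) : ACf u u' := by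
  obtain ⟨hc, h2, h2', hF⟩ := h
  have key : ∀ a b, a ≤ b → ¬ IntervalIntegrable u' volume a b → u a = 0 ∧ u b = 0 := by
    intro a b hab hn
    have h1 : ∀ y, b ≤ y → u y = u a := by
      intro y hy
      have := hF a y (hab.trans hy)
      rw [intervalIntegral.integral_undef] at this
      · linarith
      · intro hi
        apply hn
        apply hi.mono_set
        rw [uIcc_of_le hab, uIcc_of_le (hab.trans hy)]
        exact Icc_subset_Icc_right hy
    have h3 : IntegrableOn (fun _ : ℝ => (u a)^2) (Ioi b) := by
      refine (h2.integrableOn (s := Ioi b)).congr_fun ?_ measurableSet_Ioi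
      intro y hy
      simp only [h1 y (le_of_lt hy)]
    rw [integrableOn_const_iff] at h3
    have h4 : u a = 0 := by
      rcases h3 with h3 | h3
      · simpa using h3
      · simp at h3
    exact ⟨h4, (h1 b le_rfl).trans h4⟩
  have h5 : ∀ a b, IntervalIntegrable u' volume a b := by
    by_contra hcon
    push Not at hcon
    obtain ⟨a, b, hab⟩ := hcon
    have hz : ∀ a b, a ≤ b → ¬ IntervalIntegrable u' volume a b → ∀ c, u c = 0 := by
      intro a b hab hn c
      rcases le_total c b with hcb | hcb
      · by_cases hi : IntervalIntegrable u' volume c b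
        · have : ¬ IntervalIntegrable u' volume (min a c) c := by
            intro hj
            apply hn
            apply (hj.trans hi).mono_set
            rw [uIcc_of_le hab, uIcc_of_le ((min_le_left _ _).trans hab)]
            exact Icc_subset_Icc_left (min_le_left _ _)
          exact (key _ _ (min_le_right _ _) this).2
        · exact (key _ _ hcb hi).1
      · refine (key a c (hab.trans hcb) ?_).2
        intro hj
        apply hn
        apply hj.mono_set
        rw [uIcc_of_le hab, uIcc_of_le (hab.trans hcb)]
        exact Icc_subset_Icc_right hcb
    have hz' : ∀ c, u c = 0 := by
      rcases le_total a b with h | h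
      · exact hz a b h hab
      · exact hz b a h (fun h => hab h.symm)
    simp [mass, hz'] at hm
  refine ⟨h5, fun a b => ?_⟩
  rcases le_total a b with h | h
  · exact hF a b h
  · rw [intervalIntegral.integral_symm, ← hF b a h]; ring

lemma H1_mul_int {u u' : ℝ → ℝ} (h : IsH1 u u') (hac : ACf u u') :
    Integrable (fun x => u' x * u x + u x * u' x) := by
  have hm : AEStronglyMeasurable u' volume := hac.locInt.aestronglyMeasurable
  have hu : AEStronglyMeasurable u volume := h.1.aestronglyMeasurable
  refine (h.2.1.add h.2.2.1).mono' ((hm.mul hu).add (hu.mul hm)) (Eventually.of_forall fun x => ?_)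
  simp only [Real.norm_eq_abs, Pi.add_apply]
  rw [abs_le]
  constructor <;> nlinarith [sq_nonneg (u x + u' x), sq_nonneg (u x - u' x)]

lemma H1_bdd {u u' : ℝ → ℝ} (h : IsH1 u u') (hac : ACf u u') :
    ∃ C, ∀ x, u x ^ 2 ≤ C := by
  have hi := H1_mul_int h hac
  refine ⟨u 0 ^ 2 + ∫ x, ‖u' x * u x + u x * u' x‖, fun x => ?_⟩
  have h1 : u x * u x - u 0 * u 0 = ∫ t in (0:ℝ)..x, (u' t * u t + u t * u' t) :=
    (hac.mul hac).2 0 x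
  have h2 := intervalIntegral.norm_integral_le_integral_norm_uIoc (μ := volume)
    (f := fun x => u' x * u x + u x * u' x) (a := 0) (b := x)
  have h3 : ∫ x in uIoc 0 x, ‖u' x * u x + u x * u' x‖ ≤ ∫ x, ‖u' x * u x + u x * u' x‖ :=
    setIntegral_le_integral hi.norm (Eventually.of_forall fun x => norm_nonneg _)
  have h4 := le_abs_self (∫ t in (0:ℝ)..x, (u' t * u t + u t * u' t))
  rw [Real.norm_eq_abs] at h2
  nlinarith

lemma H1_tendsto {u u' : ℝ → ℝ} (h : IsH1 u u') (hac : ACf u u') :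
    Tendsto (fun x => u x * u x) atTop (𝓝 0) := by
  have hi := H1_mul_int h hac
  have h1 := intervalIntegral_tendsto_integral_Ioi (μ := volume) 0 hi.integrableOn tendsto_id
  have h2 := h1.const_add (u 0 * u 0)
  have h3 : Tendsto (fun x => u x * u x) atTop
      (𝓝 (u 0 * u 0 + ∫ x in Ioi 0, (u' x * u x + u x * u' x))) := by
    refine h2.congr fun x => ?_
    have := (hac.mul hac).2 0 x
    simp only [id]
    linarith
  have h4 : Integrable (fun x => u x * u x) := by
    simpa only [sq] using h.2.1
  have h5 := IntegrableAtFilter.eq_zero_of_tendsto (h4.integrableAtFilter atTop) (by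
    intro s hs
    rcases mem_atTop_sets.1 hs with ⟨b, hb⟩
    rw [← top_le_iff, ← volume_Ici (a := b)]
    exact measure_mono hb) h3
  rwa [h5] at h3

lemma H1_int6 {u u' : ℝ → ℝ} (h : IsH1 u u') (hac : ACf u u') :
    Integrable (fun x => u x ^ 6) := by
  obtain ⟨C, hC⟩ := H1_bdd h hac
  refine (h.2.1.const_mul (C ^ 2)).mono' (h.1.pow 6).aestronglyMeasurable
    (Eventually.of_forall fun x => ?_)
  rw [Real.norm_eq_abs, abs_of_nonneg (by positivity)]
  have h0 : 0 ≤ u x ^ 2 := sq_nonneg _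
  have : (u x ^ 2) ^ 2 ≤ C ^ 2 := by
    have := hC x
    gcongr
  calc u x ^ 6 = (u x ^ 2) ^ 2 * u x ^ 2 := by ring
    _ ≤ _ := by gcongr

def gE (m : ℝ) : ℝ := cos (2 * m / √3) / sin (2 * m / √3) / (4 * √3)

lemma gE_deriv (m : ℝ) (hs : sin (2 * m / √3) ≠ 0) :
    HasDerivAt gE (-(8 * gE m ^ 2 + 1 / 6)) m := by
  have h1 : HasDerivAt (fun m : ℝ => 2 * m / √3) (2 / √3) m := by
    simpa using ((hasDerivAt_id m).const_mul 2).div_const (√3)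
  have h2 := ((h1.cos.div h1.sin hs).div_const (4 * √3))
  have h3 : (√3) ^ 2 = 3 := by norm_num
  have h0 : √3 ≠ 0 := by positivity
  have hcs := sin_sq_add_cos_sq (2 * m / √3)
  refine HasDerivAt.congr_deriv h2 ?_
  unfold gE
  generalize sin (2 * m / √3) = s at *
  generalize cos (2 * m / √3) = c at *
  have hc : c ^ 2 = 1 - s ^ 2 := by linarith
  have hL : ((-s * (2 / √3) * s - c * (c * (2 / √3))) / s ^ 2 / (4 * √3)) = -(1 / (6 * s ^ 2)) := by
    have : (-s * (2 / √3) * s - c * (c * (2 / √3))) = - (s ^ 2 + c ^ 2) * (2 / √3) := by ring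
    rw [this, hcs]
    have : -1 * (2 / √3) / s ^ 2 / (4 * √3) = -(1 / (2 * (√3) ^ 2 * s ^ 2)) := by
      field_simp; norm_num
    rw [this, h3]; norm_num
  have hR : (c / s / (4 * √3)) ^ 2 = c ^ 2 / (48 * s ^ 2) := by
    rw [div_pow, div_pow, mul_pow, h3, div_div]; ring
  rw [hL, hR, hc]
  field_simp
  ring

lemma half_line {u u' : ℝ → ℝ} (h : IsH1 u u') (hac : ACf u u') {ε : ℝ} (hε : 0 < ε)
    (hpi : 2 * (mass u + ε) / √3 < π) :
    u 0 ^ 4 * gE ((∫ x in Ioi 0, u x ^ 2) + ε) ≤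
      ∫ x in Ioi 0, (1 / 2 * u' x ^ 2 - 1 / 6 * u x ^ 6) := by
  have h3 : 0 < √3 := by positivity
  set M : ℝ → ℝ := fun y => ∫ x in Ioi y, u x ^ 2 with hM
  have hM0 : ∀ y, 0 ≤ M y := fun y => integral_nonneg fun x => sq_nonneg _
  have hMm : ∀ y, M y ≤ mass u := fun y =>
    setIntegral_le_integral h.2.1 (Eventually.of_forall fun x => sq_nonneg _)
  have hsin' : ∀ m, 0 ≤ m → m ≤ mass u → sin (2 * (m + ε) / √3) ≠ 0 := by
    intro m hm0 hm1
    apply ne_of_gt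
    apply sin_pos_of_pos_of_lt_pi
    · positivity
    · refine lt_of_le_of_lt ?_ hpi
      gcongr
  have hsin : ∀ y, sin (2 * (M y + ε) / √3) ≠ 0 := fun y => hsin' _ (hM0 y) (hMm y)
  have hMeq : ∀ y, M y = M 0 - ∫ x in (0:ℝ)..y, u x ^ 2 := by
    intro y
    have := intervalIntegral.integral_Ioi_sub_Ioi' (h.2.1.integrableOn (s := Ioi 0))
      (h.2.1.integrableOn (s := Ioi y))
    simp only [hM]
    linarith
  have huc : Continuous u := h.1
  have hMd : ∀ y, HasDerivAt M (-(u y ^ 2)) y := by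
    intro y
    have hc : Continuous fun x => u x ^ 2 := by fun_prop
    have := (hc.integral_hasStrictDerivAt 0 y).hasDerivAt.const_sub (M 0)
    refine this.congr_of_eventuallyEq (Eventually.of_forall fun z => hMeq z)
  have hMc : Continuous M := continuous_iff_continuousAt.2 fun y => (hMd y).continuousAt
  have hMt : Tendsto M atTop (𝓝 0) := by
    have h1 := intervalIntegral_tendsto_integral_Ioi (μ := volume) 0
      (h.2.1.integrableOn (s := Ioi 0)) tendsto_id
    have h2 := h1.const_sub (M 0)
    rw [show M 0 - ∫ x in Ioi 0, u x ^ 2 = 0 from sub_self _] at h2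
    exact h2.congr fun y => (hMeq y).symm
  set k : ℝ → ℝ := fun y => gE (M y + ε) with hk
  have hkd : ∀ y, HasDerivAt k ((8 * k y ^ 2 + 1 / 6) * u y ^ 2) y := by
    intro y
    have := (gE_deriv (M y + ε) (hsin y)).comp y ((hMd y).add_const ε)
    refine this.congr_deriv ?_
    simp only [hk]; ring
  have hkc : Continuous k := continuous_iff_continuousAt.2 fun y => (hkd y).continuousAt
  have hkac : ACf k (fun y => (8 * k y ^ 2 + 1 / 6) * u y ^ 2) :=
    ACf.of_hasDerivAt hkd (by fun_prop)
  have hkt : Tendsto k atTop (𝓝 (gE ε)) := by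
    have h1 : Tendsto (fun y => M y + ε) atTop (𝓝 ε) := by
      simpa using hMt.add_const ε
    have h2 := (gE_deriv ε (by simpa using hsin' 0 le_rfl ((hM0 0).trans (hMm 0)))).continuousAt
    exact h2.tendsto.comp h1
  have hPhi := ((hac.mul hac).mul (hac.mul hac)).mul hkac
  have hint : Integrable (fun x => 1 / 2 * u' x ^ 2 - 1 / 6 * u x ^ 6) :=
    (h.2.2.1.const_mul _).sub ((H1_int6 h hac).const_mul _)
  have hut := H1_tendsto h hac
  have hlim1 := ((hut.mul hut).mul hkt)
  have hlim2 := intervalIntegral_tendsto_integral_Ioi (μ := volume) 0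
      (hint.integrableOn (s := Ioi 0)) tendsto_id
  have hlim := hlim2.add hlim1
  simp only [zero_mul, add_zero] at hlim
  have hk0 : gE ((∫ x in Ioi 0, u x ^ 2) + ε) = k 0 := rfl
  rw [hk0]
  refine ge_of_tendsto hlim ?_
  filter_upwards [eventually_ge_atTop 0] with R hR
  have e1 := hPhi.2 0 R
  have e2 : 0 ≤ ∫ x in (0:ℝ)..R, 1 / 2 * (u' x + 4 * u x ^ 3 * k x) ^ 2 :=
    intervalIntegral.integral_nonneg hR fun x _ => by positivity
  have e3 := intervalIntegral.integral_add (hint.intervalIntegrable (a := 0) (b := R)) (hPhi.1 0 R)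
  have e4 : ∫ x in (0:ℝ)..R, 1 / 2 * (u' x + 4 * u x ^ 3 * k x) ^ 2 =
      (∫ x in (0:ℝ)..R, (1 / 2 * u' x ^ 2 - 1 / 6 * u x ^ 6)) +
        (u R * u R * (u R * u R) * k R - u 0 * u 0 * (u 0 * u 0) * k 0) := by
    rw [e1, ← e3]
    refine intervalIntegral.integral_congr fun x _ => ?_
    ring
  simp only [id]
  nlinarith

lemma IsH1.reflect {u u' : ℝ → ℝ} (h : IsH1 u u') :
    IsH1 (fun x => u (-x)) (fun x => - u' (-x)) := by
  obtain ⟨hc, h2, h2', hF⟩ := h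
  refine ⟨hc.comp continuous_neg, h2.comp_neg, ?_, ?_⟩
  · simpa using h2'.comp_neg
  · intro a b hab
    have h1 := hF (-b) (-a) (by linarith)
    rw [intervalIntegral.integral_neg, intervalIntegral.integral_comp_neg, ← h1]
    ring

lemma mass_reflect (u : ℝ → ℝ) : mass (fun x => u (-x)) = mass u := by
  unfold mass
  exact integral_neg_eq_self (fun x => u x ^ 2) volume

lemma Ffun_eq (u u' : ℝ → ℝ) : Ffun 6 4 u u' =
    1 / 2 * (∫ x, u' x ^ 2) - 1 / 6 * (∫ x, u x ^ 6) - 1 / 4 * u 0 ^ 4 := by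
  have h6 : ∀ y : ℝ, |y| ^ (6:ℝ) = y ^ 6 := by
    intro y
    rw [show (6:ℝ) = ((6:ℕ):ℝ) by norm_num, Real.rpow_natCast]
    exact Even.pow_abs (by decide) y
  have h4 : ∀ y : ℝ, |y| ^ (4:ℝ) = y ^ 4 := by
    intro y
    rw [show (4:ℝ) = ((4:ℕ):ℝ) by norm_num, Real.rpow_natCast]
    exact Even.pow_abs (by decide) y
  simp only [Ffun, h6, h4]

lemma cot_ineq {a b t : ℝ} (ha : 0 < sin a) (hb : 0 < sin b) (hs : 0 < sin t) (hc : 0 ≤ cos t)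
    (hab : a + b = 2 * t) : 2 * (cos t / sin t) ≤ cos a / sin a + cos b / sin b := by
  obtain ⟨d, hd⟩ : ∃ d, d = (a - b) / 2 := ⟨_, rfl⟩
  have ea : a = t + d := by linarith
  have eb : b = t - d := by linarith
  have h1 : cos a / sin a + cos b / sin b = 2 * sin t * cos t / (sin a * sin b) := by
    have : sin (a + b) = 2 * sin t * cos t := by rw [hab, sin_two_mul]
    rw [← this, sin_add]
    field_simp
    ring
  have h2 : sin a * sin b ≤ sin t ^ 2 := by
    rw [ea, eb, sin_add, sin_sub]
    nlinarith [sin_sq_add_cos_sq t, sin_sq_add_cos_sq d, sq_nonneg (sin d)]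
  rw [h1]
  calc 2 * (cos t / sin t) = 2 * sin t * cos t / (sin t ^ 2) := by field_simp
    _ ≤ _ := by
      apply div_le_div_of_nonneg_left _ (by positivity) h2
      positivity

def th0 : ℝ := π / 2 - arcsin (√(3 / 7))

lemma cos_th0 : cos th0 = √(3 / 7) := by
  unfold th0
  rw [cos_pi_div_two_sub, sin_arcsin]
  · linarith [Real.sqrt_nonneg (3/7:ℝ)]
  · exact Real.sqrt_le_iff.2 ⟨by norm_num, by norm_num⟩

lemma sin_th0 : sin th0 = √(4 / 7) := by
  unfold th0
  rw [sin_pi_div_two_sub, cos_arcsin, Real.sq_sqrt (by norm_num)]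
  norm_num

lemma th0_pos : 0 < th0 := by
  unfold th0
  have : arcsin (√(3 / 7)) < π / 2 := by
    rw [Real.arcsin_lt_pi_div_two]
    rw [Real.sqrt_lt' one_pos]; norm_num
  linarith

lemma th0_lt : th0 < π / 2 := by
  unfold th0
  have : 0 < arcsin (√(3 / 7)) := by
    rw [Real.arcsin_pos]; positivity
  linarith

lemma lower_bound {u u' : ℝ → ℝ} (h : IsH1 u u') (hm : mass u = √3 * th0) :
    0 ≤ Ffun 6 4 u u' := by
  have h3 : 0 < √3 := by positivity
  have hmpos : 0 < mass u := by rw [hm]; exact mul_pos h3 th0_pos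
  have hac := h.zero_or hmpos
  have hr := h.reflect
  have hmr : mass (fun x => u (-x)) = mass u := mass_reflect u
  have hacr := hr.zero_or (by rw [hmr]; exact hmpos)
  have hint : Integrable (fun x => 1 / 2 * u' x ^ 2 - 1 / 6 * u x ^ 6) :=
    (h.2.2.1.const_mul _).sub ((H1_int6 h hac).const_mul _)
  have hFe : Ffun 6 4 u u' = (∫ x, (1 / 2 * u' x ^ 2 - 1 / 6 * u x ^ 6)) - 1 / 4 * u 0 ^ 4 := by
    rw [Ffun_eq, integral_sub (h.2.2.1.const_mul _) ((H1_int6 h hac).const_mul _),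
      integral_const_mul, integral_const_mul]
  have hsplit := intervalIntegral.integral_Iic_add_Ioi (hint.integrableOn (s := Iic 0))
    (hint.integrableOn (s := Ioi 0))
  have hmsplit := intervalIntegral.integral_Iic_add_Ioi (h.2.1.integrableOn (s := Iic 0))
    (h.2.1.integrableOn (s := Ioi 0))
  have hmr1 : ∫ x in Ioi 0, u (-x) ^ 2 = ∫ x in Iic 0, u x ^ 2 := by
    simpa using integral_comp_neg_Ioi 0 (fun x => u x ^ 2)
  have hFr1 : ∫ x in Ioi 0, (1 / 2 * (-u' (-x)) ^ 2 - 1 / 6 * u (-x) ^ 6) =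
      ∫ x in Iic 0, (1 / 2 * u' x ^ 2 - 1 / 6 * u x ^ 6) := by
    simpa using integral_comp_neg_Ioi 0 (fun x => 1 / 2 * u' x ^ 2 - 1 / 6 * u x ^ 6)
  set m1 := ∫ x in Ioi 0, u x ^ 2
  set m2 := ∫ x in Iic 0, u x ^ 2
  have hm1 : 0 ≤ m1 := integral_nonneg fun x => sq_nonneg _
  have hm2 : 0 ≤ m2 := integral_nonneg fun x => sq_nonneg _
  have hm12 : m2 + m1 = √3 * th0 := by rw [hmsplit]; exact hm
  set T : ℝ → ℝ := fun ε => th0 + 2 * ε / √3 with hT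
  have hTc : Continuous T := by fun_prop
  have hT0 : T 0 = th0 := by simp [hT]
  have hlim : Tendsto (fun ε => u 0 ^ 4 * (1 / (2 * √3) * (cos (T ε) / sin (T ε)) - 1 / 4))
      (𝓝[>] 0) (𝓝 0) := by
    have hcont : ContinuousAt
        (fun ε => u 0 ^ 4 * (1 / (2 * √3) * (cos (T ε) / sin (T ε)) - 1 / 4)) 0 := by
      have : sin (T 0) ≠ 0 := by rw [hT0, sin_th0]; positivity
      have h1 : ContinuousAt (fun ε => cos (T ε) / sin (T ε)) 0 :=
        ContinuousAt.div (by fun_prop) (by fun_prop) this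
      exact continuousAt_const.mul ((continuousAt_const.mul h1).sub continuousAt_const)
    have h1 := hcont.tendsto.mono_left (nhdsWithin_le_nhds (s := Ioi 0))
    have h2 : u 0 ^ 4 * (1 / (2 * √3) * (cos (T 0) / sin (T 0)) - 1 / 4) = 0 := by
      rw [hT0, cos_th0, sin_th0]
      have : √(3 / 7) / √(4 / 7) = √3 / 2 := by
        rw [← Real.sqrt_div (by norm_num)]
        rw [show (3 / 7 / (4 / 7) : ℝ) = 3 / 2 ^ 2 by norm_num, Real.sqrt_div (by norm_num),
          Real.sqrt_sq (by norm_num)]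
      rw [this]
      field_simp
      ring
    rwa [h2] at h1
  refine le_of_tendsto hlim ?_
  have hTlt : ∀ᶠ ε in 𝓝[>] 0, T ε < π / 2 := by
    apply Eventually.filter_mono nhdsWithin_le_nhds
    exact hTc.continuousAt.eventually_lt continuousAt_const (by rw [hT0]; exact th0_lt)
  filter_upwards [hTlt, self_mem_nhdsWithin] with ε hTe hε
  have hε : 0 < ε := hε
  have hTpos : 0 < T ε := by
    have := th0_pos
    simp only [hT]; positivity
  have hdiv : 2 * (√3 * th0) / √3 = 2 * th0 := by field_simp
  have hε3 : 0 < 2 * ε / √3 := by positivity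
  have hpi : 2 * (mass u + ε) / √3 < π := by
    rw [hm, mul_add, add_div, hdiv]
    simp only [hT] at hTe
    linarith
  have i1 := half_line h hac hε hpi
  have i2 := half_line hr hacr hε (by rw [hmr]; exact hpi)
  simp only [neg_zero] at i2
  rw [hmr1, hFr1] at i2
  have hsin : ∀ m, 0 ≤ m → m ≤ mass u → 0 < sin (2 * (m + ε) / √3) := by
    intro m h0 h1
    apply sin_pos_of_pos_of_lt_pi
    · positivity
    · refine lt_of_le_of_lt ?_ hpi
      gcongr
  have i3 := cot_ineq (t := T ε) (hsin m1 hm1 (by linarith)) (hsin m2 hm2 (by linarith))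
    (sin_pos_of_pos_of_lt_pi hTpos (by linarith [pi_pos]))
    (cos_nonneg_of_mem_Icc ⟨by linarith [pi_pos], hTe.le⟩) (by
      rw [← add_div]
      have : 2 * (m1 + ε) + 2 * (m2 + ε) = 2 * (√3 * th0) + 2 * (2 * ε) := by linarith
      rw [this, add_div, hdiv]
      simp only [hT]; ring)
  have i4 : 1 / (2 * √3) * (cos (T ε) / sin (T ε)) ≤ gE (m1 + ε) + gE (m2 + ε) := by
    unfold gE
    rw [← add_div]
    calc 1 / (2 * √3) * (cos (T ε) / sin (T ε)) = (2 * (cos (T ε) / sin (T ε))) / (4 * √3) := by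
          field_simp; ring
      _ ≤ _ := by gcongr
  have hu4 : 0 ≤ u 0 ^ 4 := by positivity
  rw [hFe, ← hsplit]
  nlinarith [mul_le_mul_of_nonneg_left i4 hu4]

lemma IsH1.scale {u u' : ℝ → ℝ} (h : IsH1 u u') (a : ℝ) {b : ℝ} (hb : 0 < b) :
    IsH1 (fun x => a * u (b * x)) (fun x => a * b * u' (b * x)) := by
  obtain ⟨hc, h2, h2', hF⟩ := h
  refine ⟨by fun_prop, ?_, ?_, ?_⟩
  · simp only [mul_pow a]
    exact (h2.comp_mul_left' hb.ne').const_mul (a ^ 2)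
  · simp only [mul_pow (a * b)]
    exact (h2'.comp_mul_left' hb.ne').const_mul ((a * b) ^ 2)
  · intro x y hxy
    have h1 := hF (b * x) (b * y) (by gcongr)
    rw [intervalIntegral.integral_const_mul, intervalIntegral.integral_comp_mul_left _ hb.ne',
      ← h1, smul_eq_mul]
    field_simp

lemma mass_scale (u : ℝ → ℝ) (a : ℝ) {b : ℝ} (hb : 0 < b) :
    mass (fun x => a * u (b * x)) = a ^ 2 / b * mass u := by
  unfold mass
  simp only [mul_pow a]
  rw [integral_const_mul, Measure.integral_comp_mul_left (fun x => u x ^ 2), abs_of_pos (by positivity),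
    smul_eq_mul]
  field_simp

lemma Ffun_scale (u u' : ℝ → ℝ) (a : ℝ) {b : ℝ} (hb : 0 < b) :
    Ffun 6 4 (fun x => a * u (b * x)) (fun x => a * b * u' (b * x)) =
    1 / 2 * (a ^ 2 * b * ∫ x, u' x ^ 2) - 1 / 6 * (a ^ 6 / b * ∫ x, u x ^ 6)
      - 1 / 4 * (a ^ 4 * u 0 ^ 4) := by
  rw [Ffun_eq]
  simp only [mul_pow a, mul_pow (a * b)]
  rw [integral_const_mul, integral_const_mul, Measure.integral_comp_mul_left (fun x => u x ^ 6),
    Measure.integral_comp_mul_left (fun x => u' x ^ 2), abs_of_pos (by positivity),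
    smul_eq_mul, smul_eq_mul, mul_zero]
  field_simp

lemma int6_pos {u u' : ℝ → ℝ} (h : IsH1 u u') (hm : 0 < mass u) : 0 < ∫ x, u x ^ 6 := by
  have hi := H1_int6 h (h.zero_or hm)
  have h0 : 0 ≤ ∫ x, u x ^ 6 := integral_nonneg fun x => by positivity
  refine lt_of_le_of_ne h0 fun he => ?_
  rw [eq_comm, integral_eq_zero_iff_of_nonneg (fun x => by positivity) hi] at he
  have : mass u = 0 := by
    unfold mass
    rw [integral_eq_zero_of_ae]
    filter_upwards [he] with x hx
    have : u x = 0 := by simpa using hx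
    simp [this]
  linarith

/-- Amplifying a zero-energy function strictly lowers the energy below zero. -/
lemma amplify {u u' : ℝ → ℝ} (h : IsH1 u u') (hm : 0 < mass u) (hF : Ffun 6 4 u u' = 0)
    {ν : ℝ} (hν : mass u < ν) : ∃ v v', IsH1 v v' ∧ mass v = ν ∧ Ffun 6 4 v v' < 0 := by
  set a := √(ν / mass u) with ha
  have ha2 : a ^ 2 = ν / mass u := Real.sq_sqrt (div_nonneg (hm.trans hν).le hm.le)
  have ha1 : 1 < a ^ 2 := by rw [ha2, one_lt_div hm]; exact hν
  refine ⟨_, _, h.scale a one_pos, ?_, ?_⟩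
  · rw [mass_scale u a one_pos, ha2]
    field_simp
  · rw [Ffun_scale u u' a one_pos]
    rw [Ffun_eq] at hF
    have hB := int6_pos h hm
    have hD : 0 ≤ u 0 ^ 4 := by positivity
    generalize (∫ x, u x ^ 6) = B at *
    generalize (∫ x, u' x ^ 2) = A at *
    have e4 : a ^ 4 = (a ^ 2) ^ 2 := by ring
    have e6 : a ^ 6 = (a ^ 2) ^ 3 := by ring
    rw [e4, e6]
    generalize a ^ 2 = s at *
    generalize u 0 ^ 4 = D at *
    have hA : A = 1 / 3 * B + 1 / 2 * D := by linarith
    subst hA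
    have h1 : 0 < s * (s - 1) := mul_pos (by linarith) (by linarith)
    have h2 : 0 < s * (s - 1) * (s + 1) * B := by
      apply mul_pos (mul_pos h1 (by linarith)) hB
    have h3 : 0 ≤ s * (s - 1) * D := by positivity
    simp only [div_one, mul_one]
    nlinarith

lemma sinh_tend (c : ℝ) : Tendsto (fun x : ℝ => sinh (2 * x + c)) atTop atTop := by
  have h0 : Tendsto (fun x : ℝ => 2 * x + c) atTop atTop :=
    tendsto_atTop_add_const_right _ _ (tendsto_id.const_mul_atTop (by norm_num : (0:ℝ) < 2))
  refine tendsto_atTop_mono' _ ?_ h0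
  filter_upwards [h0.eventually_ge_atTop 0] with x hx
  exact self_le_sinh_iff.2 hx

lemma exists_gs : ∃ u u', IsH1 u u' ∧ mass u = √3 * th0 ∧ Ffun 6 4 u u' = 0 := by
  obtain ⟨c, hc⟩ : ∃ c, c = arsinh (√3 / 2) := ⟨_, rfl⟩
  have h3 : 0 < √3 := by positivity
  have h3s : (√3) ^ 2 = 3 := by norm_num
  have hsc : sinh c = √3 / 2 := by rw [hc, sinh_arsinh]
  have hcc : cosh c ^ 2 = 7 / 4 := by
    rw [cosh_sq, hsc, div_pow, h3s]; norm_num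
  have hd : ∀ x : ℝ, HasDerivAt (fun x : ℝ => 2 * x + c) 2 x := fun x => by
    simpa using ((hasDerivAt_id x).const_mul 2).add_const c
  set f : ℝ → ℝ := fun x => √(√3 / cosh (2 * x + c)) with hf
  set w : ℝ → ℝ := fun x => f x * (sinh (2 * x + c) / cosh (2 * x + c)) with hw
  have hpos : ∀ x, 0 < √3 / cosh (2 * x + c) := fun x => div_pos h3 (cosh_pos _)
  have hfpos : ∀ x, 0 < f x := fun x => Real.sqrt_pos.2 (hpos x)
  have hf2 : ∀ x, f x ^ 2 = √3 / cosh (2 * x + c) := fun x => Real.sq_sqrt (hpos x).le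
  have hfc : Continuous f := by
    apply Continuous.sqrt
    exact continuous_const.div (by fun_prop) fun x => (cosh_pos _).ne'
  have hwc : Continuous w := by
    apply hfc.mul
    exact Continuous.div (by fun_prop) (by fun_prop) fun x => (cosh_pos _).ne'
  have hfd : ∀ x, HasDerivAt f (-w x) x := by
    intro x
    have h1 := ((hd x).cosh.inv (cosh_pos _).ne').const_mul (√3)
    have h2 : HasDerivAt (fun x => √3 / cosh (2 * x + c))
      (√3 * (-(sinh (2 * x + c) * 2) / cosh (2 * x + c) ^ 2)) x := h1
    have h4 := h2.sqrt (hpos x).ne'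
    refine h4.congr_deriv ?_
    change _ / (2 * f x) = -(f x * _)
    have := hf2 x
    have hC := cosh_pos (2 * x + c)
    have hfx := hfpos x
    rw [div_eq_iff (by positivity)]
    have : -(f x * (sinh (2 * x + c) / cosh (2 * x + c))) * (2 * f x) =
      - (f x ^ 2 * 2 * (sinh (2 * x + c) / cosh (2 * x + c))) := by ring
    rw [this, hf2]
    field_simp
  set u : ℝ → ℝ := fun x => f |x| with hu
  set u' : ℝ → ℝ := fun x => if x < 0 then w |x| else - w |x| with hu'
  have hu2 : ∀ x, u' x ^ 2 = w |x| ^ 2 := by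
    intro x; simp only [hu']; split_ifs <;> ring
  have huc : Continuous u := hfc.comp continuous_abs
  have hu'm : Measurable u' :=
    Measurable.ite measurableSet_Iio (hwc.comp continuous_abs).measurable
      (hwc.comp continuous_abs).neg.measurable
  -- mass
  have hmd : ∀ x ∈ Ici (0:ℝ), HasDerivAt (fun x => √3 / 2 * arctan (sinh (2 * x + c))) (f x ^ 2) x := by
    intro x _
    refine ((hd x).sinh.arctan.const_mul (√3 / 2)).congr_deriv ?_
    rw [hf2, ← cosh_sq' (2 * x + c)]
    have hC := cosh_pos (2 * x + c)
    field_simp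
  have hmt : Tendsto (fun x => √3 / 2 * arctan (sinh (2 * x + c))) atTop (𝓝 (√3 / 2 * (π / 2))) :=
    ((tendsto_nhds_of_tendsto_nhdsWithin tendsto_arctan_atTop).comp (sinh_tend c)).const_mul _
  have hmi := integrableOn_Ioi_deriv_of_nonneg' hmd (fun x _ => sq_nonneg _) hmt
  have hmv := integral_Ioi_of_hasDerivAt_of_tendsto' hmd hmi hmt
  have harc : arctan (sinh (2 * 0 + c)) = arcsin (√(3 / 7)) := by
    rw [mul_zero, zero_add, hsc, arctan_eq_arcsin]
    congr 1
    rw [div_pow, h3s, show (1 + 3 / 2 ^ 2 : ℝ) = 7 / 2 ^ 2 by norm_num,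
      Real.sqrt_div (by norm_num), Real.sqrt_sq (by norm_num), Real.sqrt_div (by norm_num)]
    field_simp
  rw [harc] at hmv
  have hmass : mass u = √3 * th0 := by
    unfold mass th0
    have := integral_comp_abs (f := fun x => f x ^ 2)
    simp only [hu]
    rw [this, hmv]; ring
  have hmpos : 0 < mass u := by rw [hmass]; exact mul_pos h3 th0_pos
  have hui : Integrable (fun x => u x ^ 2) := by
    by_contra hcon
    have : mass u = 0 := integral_undef hcon
    linarith
  have hu'i : Integrable (fun x => u' x ^ 2) := by
    refine hui.mono' (hu'm.pow_const 2).aestronglyMeasurable (Eventually.of_forall fun x => ?_)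
    rw [Real.norm_eq_abs, abs_of_nonneg (sq_nonneg _), hu2]
    simp only [hw, hu, mul_pow]
    have h1 : (sinh (2 * |x| + c) / cosh (2 * |x| + c)) ^ 2 ≤ 1 := by
      rw [div_pow, div_le_one (by have := cosh_pos (2 * |x| + c); positivity), cosh_sq]
      linarith
    have := sq_nonneg (f |x|)
    nlinarith
  have hH : IsH1 u u' := by
    refine ⟨huc, hui, hu'i, fun a b hab => ?_⟩
    symm
    apply integral_eq_of_hasDerivAt_off_countable u u' (countable_singleton (0:ℝ)) huc.continuousOn
    · rintro x ⟨_, hx⟩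
      rcases lt_or_gt_of_ne (show x ≠ 0 from hx) with h | h
      · have h1 : HasDerivAt (fun y => f (-y)) (w |x|) x := by
          have := (hfd (-x)).comp x (hasDerivAt_neg x)
          rw [abs_of_neg h]
          exact this.congr_deriv (by ring)
        have h2 : u' x = w |x| := by simp [hu', h]
        rw [h2]
        refine h1.congr_of_eventuallyEq ?_
        filter_upwards [Iio_mem_nhds h] with y hy
        simp only [hu, abs_of_neg (show y < 0 from hy)]
      · have h2 : u' x = - w x := by
          simp [hu', not_lt.2 h.le, abs_of_pos h]
        rw [h2]
        refine (hfd x).congr_of_eventuallyEq ?_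
        filter_upwards [Ioi_mem_nhds h] with y hy
        simp only [hu, abs_of_pos (show 0 < y from hy)]
    · have h1 : IntervalIntegrable (fun x => 1 + u' x ^ 2) volume a b :=
        (intervalIntegrable_const).add hu'i.intervalIntegrable
      refine h1.mono_fun' hu'm.aestronglyMeasurable (Eventually.of_forall fun x => ?_)
      simp only [Real.norm_eq_abs]
      nlinarith [sq_nonneg (|u' x| - 1), sq_abs (u' x), abs_nonneg (u' x)]
  refine ⟨u, u', hH, hmass, ?_⟩
  have h6 := H1_int6 hH (hH.zero_or hmpos)
  set G : ℝ → ℝ := fun x => 1 / 2 * w x ^ 2 - 1 / 6 * f x ^ 6 with hG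
  have hGi : Integrable (fun x => G |x|) := by
    have := (hu'i.const_mul (1/2)).sub (h6.const_mul (1/6))
    refine this.congr (Eventually.of_forall fun x => ?_)
    simp only [hG, Pi.sub_apply, hu2, hu]
  have hGi0 : IntegrableOn G (Ioi 0) := by
    refine (hGi.integrableOn (s := Ioi 0)).congr_fun (fun x hx => ?_) measurableSet_Ioi
    simp only [abs_of_pos (show 0 < x from hx)]
  have hGd : ∀ x ∈ Ici (0:ℝ),
      HasDerivAt (fun x => -(√3 / 4) * (sinh (2 * x + c) / cosh (2 * x + c) ^ 2)) (G x) x := by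
    intro x _
    have hC := cosh_pos (2 * x + c)
    refine (((hd x).sinh.div ((hd x).cosh.fun_pow 2) (pow_pos hC 2).ne').const_mul _).congr_deriv ?_
    have e6 : f x ^ 6 = (f x ^ 2) ^ 3 := by ring
    simp only [hG, hw, mul_pow]
    rw [e6, hf2, div_pow (√3), show (√3) ^ 3 = (√3) ^ 2 * √3 by ring, h3s]
    have hS := cosh_sq (2 * x + c)
    push_cast
    generalize cosh (2 * x + c) = C at *
    generalize sinh (2 * x + c) = S at *
    have hS' : S ^ 2 = C ^ 2 - 1 := by linarith
    field_simp
    ring_nf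
    rw [hS']
    ring
  have hGt : Tendsto (fun x => -(√3 / 4) * (sinh (2 * x + c) / cosh (2 * x + c) ^ 2)) atTop
      (𝓝 0) := by
    have h1 : Tendsto (fun x => sinh (2 * x + c) / cosh (2 * x + c) ^ 2) atTop (𝓝 0) := by
      have h2 := (sinh_tend c).inv_tendsto_atTop
      refine tendsto_of_tendsto_of_tendsto_of_le_of_le' tendsto_const_nhds h2 ?_ ?_
      · filter_upwards [(sinh_tend c).eventually_gt_atTop 0] with x hx
        positivity
      · filter_upwards [(sinh_tend c).eventually_gt_atTop 0] with x hx
        simp only [Pi.inv_apply]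
        rw [cosh_sq, inv_eq_one_div, div_le_div_iff₀ (by positivity) hx]
        nlinarith
    simpa using h1.const_mul (-(√3 / 4))
  have hGv := integral_Ioi_of_hasDerivAt_of_tendsto' hGd hGi0 hGt
  rw [mul_zero, zero_add, hsc, hcc] at hGv
  have hGa := integral_comp_abs (f := G)
  rw [hGv] at hGa
  have hF : Ffun 6 4 u u' = (∫ x, G |x|) - 1 / 4 * u 0 ^ 4 := by
    rw [Ffun_eq, ← integral_const_mul, ← integral_const_mul,
      ← integral_sub (hu'i.const_mul _) (h6.const_mul _)]
    simp only [hG, hu2, hu]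
  have hu0 : u 0 ^ 4 = 12 / 7 := by
    have : u 0 ^ 4 = (f 0 ^ 2) ^ 2 := by simp only [hu, abs_zero]; ring
    rw [this, hf2, mul_zero, zero_add, div_pow, h3s, hcc]; norm_num
  rw [hF, hGa, hu0]
  nlinarith

theorem stmt14 (μ : ℝ) (hμ : 0 < μ) :
    (∃ u u' : ℝ → ℝ, IsH1 u u' ∧ mass u = μ ∧
      ∀ v v' : ℝ → ℝ, IsH1 v v' → mass v = μ → Ffun 6 4 u u' ≤ Ffun 6 4 v v') ↔
    μ = Real.sqrt 3 * (Real.pi / 2 - Real.arcsin (Real.sqrt (3 / 7))) := by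
  change _ ↔ μ = √3 * th0
  have h3 : 0 < √3 := by positivity
  have hpos : 0 < √3 * th0 := mul_pos h3 th0_pos
  obtain ⟨w, w', hw, hwm, hwF⟩ := exists_gs
  constructor
  · rintro ⟨u, u', hu, hum, hmin⟩
    have hscale : ∀ l : ℝ, 0 < l → Ffun 6 4 u u' ≤ l ^ 2 * Ffun 6 4 u u' := by
      intro l hl
      have hs : √l ^ 2 = l := Real.sq_sqrt hl.le
      have h1 := hmin _ _ (hu.scale (√l) hl) (by
        rw [mass_scale u _ hl, hs, hum]; field_simp)
      rw [Ffun_scale u u' _ hl, show √l ^ 6 = (√l ^ 2) ^ 3 by ring,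
        show √l ^ 4 = (√l ^ 2) ^ 2 by ring, hs] at h1
      refine h1.trans (le_of_eq ?_)
      rw [Ffun_eq]
      field_simp
    have hF : Ffun 6 4 u u' = 0 := by
      have h1 := hscale 2 (by norm_num)
      have h2 := hscale (1 / 2) (by norm_num)
      linarith
    rcases lt_trichotomy μ (√3 * th0) with hlt | heq | hgt
    · obtain ⟨v, v', hv, hvm, hvF⟩ := amplify hu (by rw [hum]; exact hμ) hF (by rw [hum]; exact hlt)
      have := lower_bound hv hvm
      linarith
    · exact heq
    · obtain ⟨v, v', hv, hvm, hvF⟩ := amplify hw (by rw [hwm]; exact hpos) hwF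
        (by rw [hwm]; exact hgt)
      have := hmin v v' hv hvm
      linarith
  · intro he
    refine ⟨w, w', hw, hwm.trans he.symm, fun v v' hv hvm => ?_⟩
    rw [hwF]
    exact lower_bound hv (hvm.trans he)
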